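/- Let N be a positive integer, H a complex normed space, and U : ZMod N → (H →L[ℂ] H) a representation of ℤ/N on H, i.e. U 0 = id and U (s + t) = U s ∘ U t for all s, t. Fix E ∈ ZMod N and let P_E := (1/N) • ∑_{t ∈ ZMod N} e(E·t/N) • U t. Then Schrödinger's equation holds on the range of P_E: if ψ ∈ H satisfies P_E ψ = ψ, then U t ψ = e(−E·t/N) • ψ for every t ∈ ZMod N. -/

import Mathlib

/-!
The phase `t ↦ e(E·t/N)` is an additive character of `ℤ/N` (`planeWave_eq_stdAddChar`), so
translating the summation variable gives `e(E·t/N) • U t ∘ P_E = P_E`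
(`planeWave_smul_comp_sum`). Applying this to `ψ = P_E ψ` yields `e(E·t/N) • U t ψ = ψ`, and
multiplying by the inverse phase is the claim.
-/

/-- The plane-wave phase `e(E·t/N) = exp(2πi·E.val·t.val/N)`. -/
noncomputable def planeWave (N : ℕ) (E t : ZMod N) : ℂ :=
  Complex.exp (2 * Real.pi * Complex.I * ((E.val : ℂ) * (t.val : ℂ)) / N)

/-- The phase is the standard additive character of `ℤ/N` evaluated at the product `E * t`,
which makes it visibly independent of the chosen representatives. -/
theorem planeWave_eq_stdAddChar (N : ℕ) [NeZero N] (E t : ZMod N) :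
    planeWave N E t = ZMod.stdAddChar (E * t) := by
  have h := ZMod.stdAddChar_coe (N := N) ((E.val : ℤ) * (t.val : ℤ))
  push_cast [ZMod.natCast_zmod_val] at h
  rw [h, planeWave]

theorem planeWave_add (N : ℕ) [NeZero N] (E s t : ZMod N) :
    planeWave N E (s + t) = planeWave N E s * planeWave N E t := by
  simp only [planeWave_eq_stdAddChar, mul_add, AddChar.map_add_eq_mul]

/-- Reindexing the sum over the group by `s ↦ t + s` absorbs the translation `U t` into the
energy projector, at the cost of a phase. -/
theorem planeWave_smul_comp_sum (N : ℕ) [NeZero N]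
    {H : Type*} [NormedAddCommGroup H] [NormedSpace ℂ H] (U : ZMod N → (H →L[ℂ] H))
    (hUadd : ∀ s t : ZMod N, U (s + t) = (U s).comp (U t)) (E t : ZMod N) (ψ : H) :
    planeWave N E t • U t (∑ s : ZMod N, planeWave N E s • U s ψ) =
      ∑ s : ZMod N, planeWave N E s • U s ψ := by
  conv_rhs => rw [← Equiv.sum_comp (Equiv.addLeft t) (fun s => planeWave N E s • U s ψ)]
  rw [map_sum, Finset.smul_sum]
  refine Finset.sum_congr rfl fun s _ => ?_
  simp [planeWave_add, hUadd, smul_smul]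

/-- Exponentiated Schrödinger equation for the discrete periodic time-translation group
`ℤ/N`: states fixed by the energy projector `P_E` evolve by the phase `e(−E·t/N)`. -/
theorem schroedinger_discrete_periodic (N : ℕ) [NeZero N]
    (H : Type*) [NormedAddCommGroup H] [NormedSpace ℂ H]
    (U : ZMod N → (H →L[ℂ] H))
    (hU0 : U 0 = ContinuousLinearMap.id ℂ H)
    (hUadd : ∀ s t : ZMod N, U (s + t) = (U s).comp (U t))
    (E : ZMod N) (P : H →L[ℂ] H)
    (hP : P = (1 / (N : ℂ)) • ∑ t : ZMod N, planeWave N E t • U t)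
    (ψ : H) (hψ : P ψ = ψ) :
    ∀ t : ZMod N,
      U t ψ = Complex.exp (-(2 * Real.pi * Complex.I * ((E.val : ℂ) * (t.val : ℂ))) / N) • ψ := by
  intro t
  have hsum : (1 / (N : ℂ)) • ∑ s : ZMod N, planeWave N E s • U s ψ = ψ := by
    simpa [hP, sum_apply] using hψ
  have key : planeWave N E t • U t ψ = ψ := by
    rw [← hsum, map_smul, smul_comm, planeWave_smul_comp_sum N U hUadd]
  conv_rhs => rw [← key, smul_smul, planeWave, ← Complex.exp_add, neg_div, neg_add_cancel,
    Complex.exp_zero, one_smul]
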